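/- Let n = r_1 ≥ ... ≥ r_m and m = c_1 ≥ ... ≥ c_n be consistent line sums with α = (1/2)Σ_{i=1}^m |r_i − b_i|, b_i = #{j : c_j ≥ i}. Then there exists a finite set F₂ ⊆ {1,...,m}×{1,...,n} with these row and column sums such that L_h(F₂) ≤ 2n + 2α and L_v(F₂) ≤ 2m + 2α. -/

import Mathlib

open Finset

/-- Number of points of `F` in row `i`. -/
def rowSum (F : Finset (ℤ × ℤ)) (i : ℤ) : ℕ := (F.filter fun p => p.1 = i).card

/-- Number of points of `F` in column `j`. -/
def colSum (F : Finset (ℤ × ℤ)) (j : ℤ) : ℕ := (F.filter fun p => p.2 = j).card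

/-- Length of the horizontal boundary of `F`: the number of vertically adjacent pairs
of lattice points with exactly one of the two points in `F`. -/
def Lh (F : Finset (ℤ × ℤ)) : ℕ :=
  ((F ∪ F.image fun p => (p.1 - 1, p.2)).filter
    fun p => decide (p ∈ F) ≠ decide ((p.1 + 1, p.2) ∈ F)).card

/-- Length of the vertical boundary of `F`: the number of horizontally adjacent pairs
of lattice points with exactly one of the two points in `F`. -/
def Lv (F : Finset (ℤ × ℤ)) : ℕ :=
  ((F ∪ F.image fun p => (p.1, p.2 - 1)).filter
    fun p => decide (p ∈ F) ≠ decide ((p.1, p.2 + 1) ∈ F)).card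

/-! Write `R` for the lower set with row sums `r` and `B` for the lower set with column sums `c`;
then `∑ |rᵢ - bᵢ|` counts the cells of `R ∆ B`, half of which lie on either side. It suffices to
find a realization `F` and a lower set `G` with `#(F ∆ G) ≤ #(R \ B)`: a lower set has boundary
lengths at most `2n` and `2m`, and every cell of `F ∆ G` adds at most `2` to either length.

Both are found by induction on `#(R \ B)`. Take a column `p` of `R \ B` and a column `q` of `B \ R`,
`p < q`. If `p` has the fewer cells of the two, give `B` all cells of `R` in column `p` and extend
equally many rows of `R` by one cell of `B \ R` each. A realization for the new pair then agrees
with `R` in column `p`, so deleting one cell of column `p` from each extended row is possible and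
gives a realization for the old pair. If `q` has the fewer cells, do the same with all sets
complemented and both orders reversed. -/

open scoped symmDiff

section BoundaryLength

variable {F : Finset (ℤ × ℤ)}

/-- The lattice points `p` such that `F` contains exactly one of `p` and its successor in the same
column; the points counted by `Lh`. -/
def horizontalBoundary (F : Finset (ℤ × ℤ)) : Finset (ℤ × ℤ) :=
  (F ∪ F.image fun p => (p.1 - 1, p.2)).filter
    fun p => decide (p ∈ F) ≠ decide ((p.1 + 1, p.2) ∈ F)

lemma card_horizontalBoundary (F : Finset (ℤ × ℤ)) : #(horizontalBoundary F) = Lh F := rfl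

lemma mem_horizontalBoundary {p : ℤ × ℤ} :
    p ∈ horizontalBoundary F ↔ ¬(p ∈ F ↔ (p.1 + 1, p.2) ∈ F) := by
  simp only [horizontalBoundary, mem_filter, mem_union, mem_image, ne_eq, decide_eq_decide,
    and_iff_right_iff_imp]
  intro hp
  by_cases hpF : p ∈ F
  · exact .inl hpF
  · exact .inr ⟨(p.1 + 1, p.2), by tauto, by simp⟩

lemma Lv_eq_Lh_image_swap (F : Finset (ℤ × ℤ)) : Lv F = Lh (F.image Prod.swap) := by
  have mem_swap (S : Finset (ℤ × ℤ)) (a b : ℤ) : (a, b) ∈ S.image Prod.swap ↔ (b, a) ∈ S := by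
    simp
  rw [← card_horizontalBoundary, ← card_image_of_injective _ Prod.swap_injective]
  refine congrArg card (Finset.ext fun ⟨a, b⟩ => ?_)
  rw [mem_swap, mem_horizontalBoundary, mem_swap, mem_swap]
  simp only [mem_filter, mem_union, mem_image, ne_eq, decide_eq_decide, and_iff_right_iff_imp]
  intro hab
  by_cases hF : (a, b) ∈ F
  · exact .inl hF
  · exact .inr ⟨(a, b + 1), by tauto, by simp⟩

lemma Lh_le_Lh_add_Lh_symmDiff (A B : Finset (ℤ × ℤ)) : Lh A ≤ Lh B + Lh (A ∆ B) := by
  have hsub : horizontalBoundary A ⊆ horizontalBoundary B ∪ horizontalBoundary (A ∆ B) := by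
    intro p hp
    simp only [mem_union, mem_horizontalBoundary, mem_symmDiff] at hp ⊢
    tauto
  exact (card_le_card hsub).trans (card_union_le _ _)

lemma Lh_le_two_mul_card (F : Finset (ℤ × ℤ)) : Lh F ≤ 2 * #F := calc
  Lh F ≤ #(F ∪ F.image fun p => (p.1 - 1, p.2)) := card_filter_le _ _
  _ ≤ #F + #(F.image fun p => (p.1 - 1, p.2)) := card_union_le _ _
  _ ≤ 2 * #F := by have := card_image_le (s := F) (f := fun p => (p.1 - 1, p.2)); omega

lemma Lh_le_Lh_add_two_mul_card_symmDiff (A B : Finset (ℤ × ℤ)) :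
    Lh A ≤ Lh B + 2 * #(A ∆ B) :=
  (Lh_le_Lh_add_Lh_symmDiff A B).trans (Nat.add_le_add_left (Lh_le_two_mul_card _) _)

lemma Lv_le_Lv_add_two_mul_card_symmDiff (A B : Finset (ℤ × ℤ)) :
    Lv A ≤ Lv B + 2 * #(A ∆ B) := by
  have h := Lh_le_Lh_add_two_mul_card_symmDiff (A.image Prod.swap) (B.image Prod.swap)
  rwa [← image_symmDiff _ _ Prod.swap_injective, card_image_of_injective _ Prod.swap_injective,
    ← Lv_eq_Lh_image_swap, ← Lv_eq_Lh_image_swap] at h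

lemma card_filter_mem_horizontalBoundary_le {J : Finset ℤ} (hJ : ∀ p ∈ F, p.2 ∈ J)
    (hF : ∀ b, Set.OrdConnected {a | (a, b) ∈ F}) : #{p ∈ horizontalBoundary F | p ∈ F} ≤ #J := by
  refine card_le_card_of_injOn Prod.snd (fun p hp => hJ p (mem_filter.1 hp).2) ?_
  rintro ⟨a, b⟩ ha ⟨a', _⟩ ha' rfl
  simp only [coe_filter, mem_horizontalBoundary, Set.mem_ofPred_eq] at ha ha'
  have le_top {x y : ℤ} (hx : (x, b) ∈ F) (hx' : (x + 1, b) ∉ F) (hy : (y, b) ∈ F) : y ≤ x := by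
    by_contra! hxy
    exact hx' ((hF b).out hx hy ⟨by omega, by omega⟩)
  have heq : a = a' := le_antisymm (le_top ha'.2 (by tauto) ha.2) (le_top ha.2 (by tauto) ha'.2)
  rw [heq]

lemma card_filter_notMem_horizontalBoundary_le {J : Finset ℤ} (hJ : ∀ p ∈ F, p.2 ∈ J)
    (hF : ∀ b, Set.OrdConnected {a | (a, b) ∈ F}) : #{p ∈ horizontalBoundary F | p ∉ F} ≤ #J := by
  have mem_succ {p : ℤ × ℤ} (hp : p ∈ {p ∈ horizontalBoundary F | p ∉ F}) :
      p ∉ F ∧ (p.1 + 1, p.2) ∈ F := by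
    simp only [mem_filter, mem_horizontalBoundary] at hp
    tauto
  refine card_le_card_of_injOn Prod.snd (fun p hp => hJ (p.1 + 1, p.2) (mem_succ hp).2) ?_
  rintro ⟨a, b⟩ ha ⟨a', _⟩ ha' rfl
  have bot_le {x y : ℤ} (hx : (x, b) ∉ F) (hx' : (x + 1, b) ∈ F) (hy : (y + 1, b) ∈ F) :
      x ≤ y := by
    by_contra! hxy
    exact hx ((hF b).out hy hx' ⟨by omega, by omega⟩)
  obtain ⟨ha, hsa⟩ := mem_succ ha
  obtain ⟨ha', hsa'⟩ := mem_succ ha'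
  have heq : a = a' := le_antisymm (bot_le ha hsa hsa') (bot_le ha' hsa' hsa)
  rw [heq]

lemma Lh_le_of_ordConnected {J : Finset ℤ} (hJ : ∀ p ∈ F, p.2 ∈ J)
    (hF : ∀ b, Set.OrdConnected {a | (a, b) ∈ F}) : Lh F ≤ 2 * #J := by
  have htop := card_filter_mem_horizontalBoundary_le hJ hF
  have hbot := card_filter_notMem_horizontalBoundary_le hJ hF
  have hsum := card_filter_add_card_filter_not (s := horizontalBoundary F) (· ∈ F)
  rw [card_horizontalBoundary] at hsum
  omega

lemma Lv_le_of_ordConnected {I : Finset ℤ} (hI : ∀ p ∈ F, p.1 ∈ I)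
    (hF : ∀ a, Set.OrdConnected {b | (a, b) ∈ F}) : Lv F ≤ 2 * #I := by
  rw [Lv_eq_Lh_image_swap]
  refine Lh_le_of_ordConnected (fun p hp => ?_) fun a => ?_
  · obtain ⟨q, hq, rfl⟩ := mem_image.1 hp
    exact hI q hq
  · simpa using hF a

end BoundaryLength

section Slices

variable {ι κ : Type*} [DecidableEq ι] [DecidableEq κ]

/-- The set of columns met by `S` in row `i`. -/
def rowSlice (S : Finset (ι × κ)) (i : ι) : Finset κ := {x ∈ S | x.1 = i}.image Prod.snd

/-- The set of rows met by `S` in column `j`. -/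
def colSlice (S : Finset (ι × κ)) (j : κ) : Finset ι := {x ∈ S | x.2 = j}.image Prod.fst

variable {S T : Finset (ι × κ)} {i : ι} {j : κ}

@[simp] lemma mem_rowSlice : j ∈ rowSlice S i ↔ (i, j) ∈ S := by simp [rowSlice]

@[simp] lemma mem_colSlice : i ∈ colSlice S j ↔ (i, j) ∈ S := by simp [colSlice]

lemma rowSlice_union : rowSlice (S ∪ T) i = rowSlice S i ∪ rowSlice T i := by ext; simp

lemma colSlice_union : colSlice (S ∪ T) j = colSlice S j ∪ colSlice T j := by ext; simp

lemma rowSlice_sdiff : rowSlice (S \ T) i = rowSlice S i \ rowSlice T i := by ext; simp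

lemma colSlice_sdiff : colSlice (S \ T) j = colSlice S j \ colSlice T j := by ext; simp

lemma colSlice_sdiff_product_singleton_self {I : Finset ι} :
    colSlice (S \ I ×ˢ {j}) j = colSlice S j \ I := by ext; simp

lemma colSlice_sdiff_product_singleton_of_ne {I : Finset ι} {p : κ} (hj : j ≠ p) :
    colSlice (S \ I ×ˢ {p}) j = colSlice S j := by ext; simp [hj.symm]

lemma card_rowSlice_sdiff_product_singleton {I : Finset ι} (hI : I ⊆ colSlice S j) :
    #(rowSlice (S \ I ×ˢ {j}) i) + (if i ∈ I then 1 else 0) = #(rowSlice S i) := by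
  split_ifs with hi
  · have herase : rowSlice (S \ I ×ˢ {j}) i = (rowSlice S i).erase j := by
      ext; simp [hi, and_comm, eq_comm]
    rw [herase, card_erase_add_one (mem_rowSlice.2 (mem_colSlice.1 (hI hi)))]
  · rw [add_zero]
    congr 1; ext; simp [hi]

lemma card_filter_fst_eq : #{x ∈ S | x.1 = i} = #(rowSlice S i) := by
  refine (card_image_of_injOn fun x hx y hy h => ?_).symm
  simp only [coe_filter, Set.mem_ofPred_eq] at hx hy
  exact Prod.ext (hx.2.trans hy.2.symm) h

lemma card_filter_snd_eq : #{x ∈ S | x.2 = j} = #(colSlice S j) := by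
  refine (card_image_of_injOn fun x hx y hy h => ?_).symm
  simp only [coe_filter, Set.mem_ofPred_eq] at hx hy
  exact Prod.ext h (hx.2.trans hy.2.symm)

lemma sum_card_rowSlice [Fintype ι] (S : Finset (ι × κ)) : ∑ i, #(rowSlice S i) = #S := by
  simp only [← card_filter_fst_eq]
  exact (card_eq_sum_card_fiberwise fun _ _ => mem_univ _).symm

lemma sum_card_colSlice [Fintype κ] (S : Finset (ι × κ)) : ∑ j, #(colSlice S j) = #S := by
  simp only [← card_filter_snd_eq]
  exact (card_eq_sum_card_fiberwise fun _ _ => mem_univ _).symm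

variable [Fintype ι] [Fintype κ]

lemma rowSlice_compl : rowSlice Sᶜ i = (rowSlice S i)ᶜ := by ext; simp

lemma colSlice_compl : colSlice Sᶜ j = (colSlice S j)ᶜ := by ext; simp

end Slices

section NestedFinsets

variable {α : Type*} {s t : Finset α}

lemma eq_of_subset_or_subset_of_card_eq (h : s ⊆ t ∨ t ⊆ s) (hcard : #s = #t) : s = t :=
  h.elim (eq_of_subset_of_card_le · hcard.ge) fun hts => (eq_of_subset_of_card_le hts hcard.le).symm

lemma natAbs_card_sub_card [DecidableEq α] (h : s ⊆ t ∨ t ⊆ s) :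
    ((#s : ℤ) - #t).natAbs = #(s \ t) + #(t \ s) := by
  obtain h | h := h <;>
  · have hcard := card_sdiff_add_card_eq_card h
    rw [sdiff_eq_empty_iff_subset.2 h, card_empty]
    omega

lemma subset_or_subset_of_union_subset_or_subset [DecidableEq α] {a b : Finset α} (ha : a ⊆ b \ s)
    (hsb : s ⊆ b ∨ b ⊆ s) (h : s ∪ a ⊆ t ∨ t ⊆ s ∪ a) (hcard : #t = #b) : s ⊆ t ∨ t ⊆ s := by
  obtain hsub | hsub := h
  · exact .inl (subset_union_left.trans hsub)
  obtain hsb | hbs := hsb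
  · have hsab : s ∪ a ⊆ b := union_subset hsb (ha.trans sdiff_subset)
    rw [eq_of_subset_of_card_le hsub ((card_le_card hsab).trans hcard.ge)]
    exact .inl subset_union_left
  · rw [sdiff_eq_empty_iff_subset.2 hbs, subset_empty] at ha
    rw [ha, union_empty] at hsub
    exact .inr hsub

end NestedFinsets

section Realization

variable {ι κ : Type*} [DecidableEq ι] [DecidableEq κ]
  {R B F R' B' A : Finset (ι × κ)}

/-- `F` has the row sums of `R` and the column sums of `B`. -/
structure IsRealization (R B F : Finset (ι × κ)) : Prop where
  card_rowSlice (i : ι) : #(rowSlice F i) = #(rowSlice R i)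
  card_colSlice (j : κ) : #(colSlice F j) = #(colSlice B j)

/-- A realization each of whose columns is comparable with the same column of `R`. This makes two
columns equal once they have equal sums, which is what allows the induction to remove cells. -/
structure IsNestedRealization (R B F : Finset (ι × κ)) : Prop extends IsRealization R B F where
  nested (j : κ) : colSlice R j ⊆ colSlice F j ∨ colSlice F j ⊆ colSlice R j

lemma IsNestedRealization.compl [Fintype ι] [Fintype κ] (hF : IsNestedRealization R B F) :
    IsNestedRealization Rᶜ Bᶜ Fᶜ where
  card_rowSlice i := by simp only [rowSlice_compl, card_compl, hF.card_rowSlice]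
  card_colSlice j := by simp only [colSlice_compl, card_compl, hF.card_colSlice]
  nested j := by
    simpa only [colSlice_compl, compl_subset_compl] using (hF.nested j).symm

/-- The pair `R'`, `B'` is strictly closer together than `R`, `B`, and nested realizations can be
transferred back from it at a cost of at most the decrease of the distance. -/
structure IsReduction (R B R' B' : Finset (ι × κ)) : Prop where
  card_lt : #(R' \ B') < #(R \ B)
  exists_isNestedRealization (F' : Finset (ι × κ)) : IsNestedRealization R' B' F' →
    ∃ F, IsNestedRealization R B F ∧ #(F ∆ F') + #(R' \ B') ≤ #(R \ B)

lemma IsReduction.of_compl [Fintype ι] [Fintype κ] (h : IsReduction Rᶜ Bᶜ R' B')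
    (hRB : #(R \ B) = #(B \ R))
    (hRB' : #(R' \ B') = #(B' \ R')) : IsReduction R B R'ᶜ B'ᶜ := by
  have hcard : #(Rᶜ \ Bᶜ) = #(R \ B) := by rw [compl_sdiff_compl, hRB]
  have hcard' : #(R'ᶜ \ B'ᶜ) = #(R' \ B') := by rw [compl_sdiff_compl, hRB']
  refine ⟨?_, fun F' hF' => ?_⟩
  · rw [hcard', ← hcard]
    exact h.card_lt
  · obtain ⟨F, hF, hle⟩ := h.exists_isNestedRealization F'ᶜ (by simpa using hF'.compl)
    refine ⟨Fᶜ, by simpa using hF.compl, ?_⟩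
    rwa [hcard', ← hcard, ← compl_symmDiff_compl, compl_compl]

lemma IsNestedRealization.sdiff_product_singleton {F' : Finset (ι × κ)} {p : κ} {I : Finset ι}
    (hA : A ⊆ B \ R) (hArow : ∀ i, #(rowSlice A i) = if i ∈ I then 1 else 0)
    (hp : colSlice B p ⊆ colSlice R p) (hI : I ⊆ colSlice R p)
    (hIcard : #I = #(colSlice R p \ colSlice B p))
    (hcol : ∀ j, colSlice R j ⊆ colSlice B j ∨ colSlice B j ⊆ colSlice R j)
    (hF' : IsNestedRealization (R ∪ A) (B ∪ {x ∈ R \ B | x.2 = p}) F') :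
    IsNestedRealization R B (F' \ I ×ˢ {p}) := by
  have hAcol (j : κ) : colSlice A j ⊆ colSlice B j \ colSlice R j := by
    rw [← colSlice_sdiff]
    exact fun i hi => mem_colSlice.2 (hA (mem_colSlice.1 hi))
  have hF'p : colSlice F' p = colSlice R p := by
    have hB'p : colSlice (B ∪ {x ∈ R \ B | x.2 = p}) p = colSlice R p := by
      rw [colSlice_union, ← union_sdiff_of_subset hp, ← colSlice_sdiff]
      congr 1; ext; simp
    have hR'p : colSlice (R ∪ A) p = colSlice R p := by
      rw [colSlice_union, union_eq_left]
      exact (hAcol p).trans (sdiff_subset.trans hp)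
    exact (eq_of_subset_or_subset_of_card_eq (hR'p ▸ hF'.nested p)
      (by rw [hF'.card_colSlice, hB'p])).symm
  have hF'j {j : κ} (hj : j ≠ p) : #(colSlice F' j) = #(colSlice B j) := by
    rw [hF'.card_colSlice]
    congr 1; ext; simp [hj]
  refine ⟨⟨fun i => ?_, fun j => ?_⟩, fun j => ?_⟩
  · have hdisj : Disjoint (rowSlice R i) (rowSlice A i) :=
      disjoint_left.2 fun j hR hA' => (mem_sdiff.1 (hA (mem_rowSlice.1 hA'))).2 (mem_rowSlice.1 hR)
    have hrow := hF'.card_rowSlice i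
    rw [rowSlice_union, card_union_of_disjoint hdisj, hArow,
      ← card_rowSlice_sdiff_product_singleton (hF'p ▸ hI)] at hrow
    exact Nat.add_right_cancel hrow
  · obtain rfl | hj := eq_or_ne j p
    · rw [colSlice_sdiff_product_singleton_self, hF'p, card_sdiff_of_subset hI, hIcard,
        ← card_sdiff_add_card_eq_card hp, Nat.add_sub_cancel_left]
    · rw [colSlice_sdiff_product_singleton_of_ne hj, hF'j hj]
  · obtain rfl | hj := eq_or_ne j p
    · rw [colSlice_sdiff_product_singleton_self, hF'p]
      exact .inr sdiff_subset
    · rw [colSlice_sdiff_product_singleton_of_ne hj]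
      exact subset_or_subset_of_union_subset_or_subset (hAcol j) (hcol j)
        (colSlice_union (S := R) (T := A) ▸ hF'.nested j) (hF'j hj)

lemma isReduction_union {p : κ} {I : Finset ι}
    (hA : A ⊆ B \ R) (hArow : ∀ i, #(rowSlice A i) = if i ∈ I then 1 else 0)
    (hp : colSlice B p ⊂ colSlice R p) (hI : I ⊆ colSlice R p)
    (hIcard : #I = #(colSlice R p \ colSlice B p))
    (hcol : ∀ j, colSlice R j ⊆ colSlice B j ∨ colSlice B j ⊆ colSlice R j) :
    IsReduction R B (R ∪ A) (B ∪ {x ∈ R \ B | x.2 = p}) := by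
  have hcard : #I + #((R ∪ A) \ (B ∪ {x ∈ R \ B | x.2 = p})) = #(R \ B) := by
    rw [hIcard, ← colSlice_sdiff, ← card_filter_snd_eq,
      ← card_filter_add_card_filter_not (s := R \ B) (fun x => x.2 = p)]
    congr 2
    ext x
    have := @hA x
    simp only [mem_sdiff, mem_union, mem_filter] at this ⊢
    tauto
  have hpos : 0 < #I := by
    rw [hIcard, card_pos, sdiff_nonempty]
    exact hp.not_subset
  refine ⟨by omega, fun F' hF' =>
    ⟨F' \ I ×ˢ {p}, hF'.sdiff_product_singleton hA hArow hp.subset hI hIcard hcol, ?_⟩⟩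
  have hdist : #((F' \ I ×ˢ {p}) ∆ F') ≤ #I := by
    rw [← mul_one #I, ← card_singleton p, ← card_product]
    refine card_le_card fun x hx => ?_
    simp only [mem_symmDiff, mem_sdiff] at hx
    tauto
  omega

end Realization

section ColumnBallot

variable {ι κ : Type*} [LinearOrder κ] {X Y A : Finset (ι × κ)}

open Classical in
/-- Every initial set of columns contains at most as many cells of `X` as of `Y`. -/
def ColumnBallot (X Y : Finset (ι × κ)) : Prop :=
  ∀ T : Set κ, IsLowerSet T → #{x ∈ X | x.2 ∈ T} ≤ #{x ∈ Y | x.2 ∈ T}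

lemma ColumnBallot.toDual (h : ColumnBallot X Y) (hcard : #X = #Y) :
    ColumnBallot (κ := κᵒᵈ) Y X := by
  classical
  intro (T : Set κ) hT
  have hle := h Tᶜ fun a b hba ha hb => ha (hT hba hb)
  have hX := card_filter_add_card_filter_not (s := X) (·.2 ∈ T)
  have hY := card_filter_add_card_filter_not (s := Y) (·.2 ∈ T)
  simp only [Set.mem_compl_iff] at hle
  change #{x ∈ Y | x.2 ∈ T} ≤ #{x ∈ X | x.2 ∈ T}
  omega

lemma ColumnBallot.exists_snd_le (h : ColumnBallot X Y) {x : ι × κ} (hx : x ∈ X) :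
    ∃ y ∈ Y, y.2 ≤ x.2 := by
  classical
  have hpos : 0 < #{y ∈ Y | y.2 ∈ Set.Iic x.2} := calc
    0 < #{y ∈ X | y.2 ∈ Set.Iic x.2} := card_pos.2 ⟨x, mem_filter.2 ⟨hx, Set.mem_Iic.2 le_rfl⟩⟩
    _ ≤ #{y ∈ Y | y.2 ∈ Set.Iic x.2} := by convert h (Set.Iic x.2) (isLowerSet_Iic _)
  obtain ⟨y, hy⟩ := card_pos.1 hpos
  exact ⟨y, (mem_filter.1 hy).1, (mem_filter.1 hy).2⟩

open Classical in
lemma ColumnBallot.card_filter_sdiff_le_of_notMem [DecidableEq ι] (h : ColumnBallot X Y) {p : κ}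
    {T : Set κ} (hT : IsLowerSet T) (hp : p ∉ T) :
    #{x ∈ X \ A | x.2 ∈ T} ≤ #{y ∈ Y \ {y ∈ Y | y.2 = p} | y.2 ∈ T} := calc
  #{x ∈ X \ A | x.2 ∈ T} ≤ #{x ∈ X | x.2 ∈ T} := by gcongr; exact sdiff_subset
  _ ≤ #{y ∈ Y | y.2 ∈ T} := h T hT
  _ = #{y ∈ Y \ {y ∈ Y | y.2 = p} | y.2 ∈ T} := by
    congr 1; ext y
    simp only [mem_filter, mem_sdiff]
    grind

open Classical in
lemma ColumnBallot.card_filter_sdiff_le_of_mem [DecidableEq ι] (h : ColumnBallot X Y) {p : κ}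
    {T : Set κ} (hT : IsLowerSet T) (hp : p ∈ T) (hAX : A ⊆ X) (hAT : ∀ x ∈ A, x.2 ∈ T)
    (hcard : #A = #{y ∈ Y | y.2 = p}) :
    #{x ∈ X \ A | x.2 ∈ T} ≤ #{y ∈ Y \ {y ∈ Y | y.2 = p} | y.2 ∈ T} := calc
  #{x ∈ X \ A | x.2 ∈ T} = #{x ∈ X | x.2 ∈ T} - #A := by
    rw [← card_sdiff_of_subset fun x hx => mem_filter.2 ⟨hAX hx, hAT x hx⟩]
    congr 1; ext x
    simp only [mem_filter, mem_sdiff]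
    tauto
  _ ≤ #{y ∈ Y | y.2 ∈ T} - #{y ∈ Y | y.2 = p} := by
    rw [hcard]
    exact Nat.sub_le_sub_right (h T hT) _
  _ = #{y ∈ Y \ {y ∈ Y | y.2 = p} | y.2 ∈ T} := by
    rw [← card_sdiff_of_subset fun y hy => by grind]
    congr 1; ext y
    simp only [mem_filter, mem_sdiff]
    tauto

lemma ColumnBallot.sdiff [DecidableEq ι] (h : ColumnBallot X Y) {p q : κ}
    (hsep : ∀ x ∈ X, ∀ y ∈ Y, p ≤ x.2 → y.2 ≤ q → y.2 ≤ x.2)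
    (hAX : A ⊆ X) (hAq : ∀ x ∈ A, x.2 ≤ q) (hcard : #A = #{y ∈ Y | y.2 = p}) :
    ColumnBallot (X \ A) (Y \ {y ∈ Y | y.2 = p}) := by
  classical
  intro T hT
  by_cases hp : p ∈ T
  swap
  · exact h.card_filter_sdiff_le_of_notMem hT hp
  by_cases hq : q ∈ T
  · exact h.card_filter_sdiff_le_of_mem hT hp hAX (fun x hx => hT (hAq x hx) hq) hcard
  have lt_q {j : κ} (hj : j ∈ T) : j < q := lt_of_not_ge fun hqj => hq (hT hqj hj)
  by_cases hx : ∃ x ∈ X, p ≤ x.2 ∧ x.2 ∈ T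
  · obtain ⟨x, hxX, hpx, hxT⟩ := hx
    calc #{x ∈ X \ A | x.2 ∈ T} ≤ #{x ∈ X \ A | x.2 ∈ Set.Iic q} :=
          card_le_card (monotone_filter_right _ fun x _ hxT => (lt_q hxT).le)
      _ ≤ #{y ∈ Y \ {y ∈ Y | y.2 = p} | y.2 ∈ Set.Iic q} := by
          convert h.card_filter_sdiff_le_of_mem (isLowerSet_Iic q) (lt_q hp).le hAX hAq hcard
      _ ≤ #{y ∈ Y \ {y ∈ Y | y.2 = p} | y.2 ∈ T} :=
          card_le_card (monotone_filter_right _ fun y hy hyq =>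
            hT (hsep x hxX y (mem_sdiff.1 hy).1 hpx hyq) hxT)
  · push Not at hx
    calc #{x ∈ X \ A | x.2 ∈ T} ≤ #{x ∈ X \ A | x.2 ∈ Set.Iio p} :=
          card_le_card (monotone_filter_right _ fun x hxX hxT =>
            lt_of_not_ge fun hpx => hx x (mem_sdiff.1 hxX).1 hpx hxT)
      _ ≤ #{y ∈ Y \ {y ∈ Y | y.2 = p} | y.2 ∈ Set.Iio p} := by
          convert h.card_filter_sdiff_le_of_notMem (isLowerSet_Iio p) (lt_irrefl p)
      _ ≤ #{y ∈ Y \ {y ∈ Y | y.2 = p} | y.2 ∈ T} :=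
          card_le_card (monotone_filter_right _ fun y _ hyp => hT (Set.mem_Iio.1 hyp).le hp)

end ColumnBallot

section LowerSets

variable {ι κ : Type*} [LinearOrder ι] [LinearOrder κ] {R B F : Finset (ι × κ)} {p q : κ}

/-- Lower sets `R` and `B` of equal size that satisfy the Gale–Ryser condition, i.e. such that the
row sums of `R` and the column sums of `B` are consistent. -/
structure DominancePair (R B : Finset (ι × κ)) : Prop where
  isLowerSet_left : IsLowerSet (R : Set (ι × κ))
  isLowerSet_right : IsLowerSet (B : Set (ι × κ))
  card_sdiff_eq : #(R \ B) = #(B \ R)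
  ballot : ColumnBallot (B \ R) (R \ B)

/-- A column `p` of `R \ B` and a column `q` of `B \ R` between which one can exchange cells while
keeping the sets lower. The conditions are invariant under complementing both sets, reversing both
orders and swapping `p` with `q`. -/
structure IsExchangeBlock (R B : Finset (ι × κ)) (p q : κ) : Prop where
  lt : p < q
  ssubset_left : colSlice B p ⊂ colSlice R p
  ssubset_right : colSlice R q ⊂ colSlice B q
  separated : ∀ x ∈ B \ R, ∀ y ∈ R \ B, p ≤ x.2 → y.2 ≤ q → y.2 ≤ x.2
  subset_of_lt : ∀ j < p, colSlice R p ⊆ colSlice B j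
  subset_of_gt : ∀ j > q, colSlice B j ⊆ colSlice R q

lemma isLowerSet_colSlice (hR : IsLowerSet (R : Set (ι × κ))) (j : κ) :
    IsLowerSet (colSlice R j : Set ι) := fun i i' hi h => by
  simp only [mem_coe, mem_colSlice] at h ⊢
  exact hR (Prod.mk_le_mk.2 ⟨hi, le_rfl⟩) h

lemma isLowerSet_rowSlice (hR : IsLowerSet (R : Set (ι × κ))) (i : ι) :
    IsLowerSet (rowSlice R i : Set κ) := fun j j' hj h => by
  simp only [mem_coe, mem_rowSlice] at h ⊢
  exact hR (Prod.mk_le_mk.2 ⟨le_rfl, hj⟩) h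

lemma colSlice_subset_or_subset (hR : IsLowerSet (R : Set (ι × κ)))
    (hB : IsLowerSet (B : Set (ι × κ))) (j : κ) :
    colSlice R j ⊆ colSlice B j ∨ colSlice B j ⊆ colSlice R j :=
  mod_cast (isLowerSet_colSlice hR j).total (isLowerSet_colSlice hB j)

lemma sum_natAbs_card_rowSlice_sub [Fintype ι] (hR : IsLowerSet (R : Set (ι × κ)))
    (hB : IsLowerSet (B : Set (ι × κ))) :
    ∑ i, ((#(rowSlice R i) : ℤ) - #(rowSlice B i)).natAbs = #(R \ B) + #(B \ R) := by
  rw [← sum_card_rowSlice (R \ B), ← sum_card_rowSlice (B \ R), ← sum_add_distrib]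
  refine sum_congr rfl fun i _ => ?_
  rw [rowSlice_sdiff, rowSlice_sdiff]
  exact natAbs_card_sub_card <|
    mod_cast (isLowerSet_rowSlice hR i).total (isLowerSet_rowSlice hB i)

lemma colSlice_ssubset_of_mem_sdiff (hR : IsLowerSet (R : Set (ι × κ)))
    (hB : IsLowerSet (B : Set (ι × κ))) {x : ι × κ} (hx : x ∈ R \ B) :
    colSlice B x.2 ⊂ colSlice R x.2 := by
  rw [mem_sdiff] at hx
  have hnot : ¬colSlice R x.2 ⊆ colSlice B x.2 := fun hsub =>
    hx.2 (mem_colSlice.1 (hsub (mem_colSlice.2 hx.1)))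
  exact ⟨(colSlice_subset_or_subset hR hB x.2).resolve_left hnot, hnot⟩

lemma DominancePair.compl [Fintype ι] [Fintype κ] (h : DominancePair R B) :
    DominancePair (ι := ιᵒᵈ) (κ := κᵒᵈ) Rᶜ Bᶜ := by
  have isUpperSet_compl {S : Finset (ι × κ)} (hS : IsLowerSet (S : Set (ι × κ))) :
      IsUpperSet ((Sᶜ : Finset (ι × κ)) : Set (ι × κ)) := by
    rw [coe_compl]
    exact hS.compl
  have hcard : #(Rᶜ \ Bᶜ) = #(Bᶜ \ Rᶜ) := by
    rw [compl_sdiff_compl, compl_sdiff_compl, h.card_sdiff_eq]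
  have hballot : ColumnBallot (κ := κᵒᵈ) (Bᶜ \ Rᶜ : Finset (ι × κ)) (Rᶜ \ Bᶜ : Finset (ι × κ)) := by
    rw [compl_sdiff_compl, compl_sdiff_compl]
    exact h.ballot.toDual h.card_sdiff_eq.symm
  exact ⟨(isUpperSet_compl h.isLowerSet_left).toDual, (isUpperSet_compl h.isLowerSet_right).toDual,
    hcard, hballot⟩

lemma IsExchangeBlock.compl [Fintype ι] [Fintype κ] (h : IsExchangeBlock R B p q) :
    IsExchangeBlock (ι := ιᵒᵈ) (κ := κᵒᵈ) Rᶜ Bᶜ q p := by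
  have subset_compl {S T : Finset (ι × κ)} {i j : κ} (hST : colSlice S i ⊆ colSlice T j) :
      colSlice Tᶜ j ⊆ colSlice Sᶜ i := by
    simpa only [colSlice_compl, compl_subset_compl] using hST
  have ssubset_compl {S T : Finset (ι × κ)} {j : κ} (hST : colSlice S j ⊂ colSlice T j) :
      colSlice Tᶜ j ⊂ colSlice Sᶜ j := by
    simpa only [colSlice_compl, compl_ssubset_compl] using hST
  have hsep : ∀ x ∈ Bᶜ \ Rᶜ, ∀ y ∈ Rᶜ \ Bᶜ, x.2 ≤ q → p ≤ y.2 → x.2 ≤ y.2 := by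
    rw [compl_sdiff_compl, compl_sdiff_compl]
    exact fun x hx y hy hxq hpy => h.separated y hy x hx hpy hxq
  exact ⟨h.lt, ssubset_compl h.ssubset_right, ssubset_compl h.ssubset_left, hsep,
    fun j hj => subset_compl (h.subset_of_gt j hj), fun j hj => subset_compl (h.subset_of_lt j hj)⟩

lemma exists_initial_subset_card_eq (N : Finset ι) {k : ℕ} (hk : k ≤ #N) :
    ∃ I ⊆ N, #I = k ∧ ∀ i ∈ I, ∀ i' ∈ N, i' ≤ i → i' ∈ I := by
  induction N using Finset.induction_on_max generalizing k with
  | empty => exact ⟨∅, by simp_all⟩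
  | insert a s ha ih =>
    obtain hks | hks := Nat.lt_or_ge #s k
    · have has : a ∉ s := fun h => (ha a h).false
      rw [card_insert_of_notMem has] at hk
      exact ⟨insert a s, Subset.rfl, by rw [card_insert_of_notMem has]; omega,
        fun _ _ i' hi' _ => hi'⟩
    · obtain ⟨I, hIs, hcard, hI⟩ := ih hks
      refine ⟨I, hIs.trans (subset_insert a s), hcard, fun i hi i' hi' hle => ?_⟩
      have hi'a : i' ≠ a := (hle.trans_lt (ha i (hIs hi))).ne
      exact hI i hi i' (mem_of_mem_insert_of_ne hi' hi'a) hle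

/-- The cells of `X` that are leftmost in their row, for the rows in `I`. -/
def leftmost (X : Finset (ι × κ)) (I : Finset ι) : Finset (ι × κ) :=
  {x ∈ X | x.1 ∈ I ∧ ∀ y ∈ X, y.1 = x.1 → x.2 ≤ y.2}

lemma leftmost_subset (X : Finset (ι × κ)) (I : Finset ι) : leftmost X I ⊆ X :=
  filter_subset _ _

lemma snd_le_of_mem_leftmost {x : ι × κ} {X : Finset (ι × κ)} {I : Finset ι}
    (hI : ∀ i ∈ I, (i, q) ∈ X) (hx : x ∈ leftmost X I) : x.2 ≤ q :=
  have hx := (mem_filter.1 hx).2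
  hx.2 (x.1, q) (hI x.1 hx.1) rfl

lemma card_rowSlice_leftmost {X : Finset (ι × κ)} {I : Finset ι} (hI : ∀ i ∈ I, (i, q) ∈ X)
    (i : ι) : #(rowSlice (leftmost X I) i) = if i ∈ I then 1 else 0 := by
  split_ifs with hi
  · obtain ⟨j, hj, hmin⟩ := exists_min_image (rowSlice X i) id ⟨q, mem_rowSlice.2 (hI i hi)⟩
    refine card_eq_one.2 ⟨j, Finset.ext fun j' => ?_⟩
    simp only [mem_rowSlice, id] at hj hmin
    simp only [mem_rowSlice, leftmost, mem_filter, mem_singleton, hi, true_and]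
    constructor
    · rintro ⟨hj', hle⟩
      exact (hle _ hj rfl).antisymm (hmin _ hj')
    · rintro rfl
      exact ⟨hj, fun y hy hyi => hmin _ (hyi ▸ hy)⟩
  · rw [card_eq_zero, eq_empty_iff_forall_notMem]
    exact fun j hj => hi (mem_filter.1 (mem_rowSlice.1 hj)).2.1

lemma card_leftmost {X : Finset (ι × κ)} {I : Finset ι} (hI : ∀ i ∈ I, (i, q) ∈ X) :
    #(leftmost X I) = #I := by
  have hfst : Set.MapsTo Prod.fst (leftmost X I : Set (ι × κ)) (I : Set ι) :=
    fun x hx => (mem_filter.1 (mem_coe.1 hx)).2.1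
  rw [card_eq_sum_card_fiberwise hfst, card_eq_sum_ones]
  exact sum_congr rfl fun i hi => by rw [card_filter_fst_eq, card_rowSlice_leftmost hI, if_pos hi]

lemma isLowerSet_union_leftmost (hR : IsLowerSet (R : Set (ι × κ)))
    (hB : IsLowerSet (B : Set (ι × κ))) {I : Finset ι} (hIq : ∀ i ∈ I, (i, q) ∈ B \ R)
    (hI : ∀ i ∈ I, ∀ i' ≤ i, (i', q) ∈ B \ R → i' ∈ I) :
    IsLowerSet ((R ∪ leftmost (B \ R) I : Finset (ι × κ)) : Set (ι × κ)) := by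
  rintro ⟨i, j⟩ ⟨i', j'⟩ hle hx
  rw [mem_coe, mem_union] at hx ⊢
  obtain hx | hx := hx
  · exact .inl (hR hle hx)
  by_cases hyR : (i', j') ∈ R
  · exact .inl hyR
  have hjq : j ≤ q := snd_le_of_mem_leftmost hIq hx
  obtain ⟨hxX, hiI, hmin⟩ := mem_filter.1 hx
  have hxB : (i, j) ∈ B := (mem_sdiff.1 hxX).1
  have hiq : (i', q) ∈ B \ R := mem_sdiff.2
    ⟨hB (Prod.mk_le_mk.2 ⟨hle.1, le_rfl⟩) (mem_sdiff.1 (hIq i hiI)).1,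
      fun h => hyR (hR (Prod.mk_le_mk.2 ⟨le_rfl, hle.2.trans hjq⟩) h)⟩
  refine .inr (mem_filter.2 ⟨mem_sdiff.2 ⟨hB hle hxB, hyR⟩, hI i hiI i' hle.1 hiq, ?_⟩)
  rintro ⟨_, k⟩ hk rfl
  by_contra! hkj
  have hikX : (i, k) ∈ B \ R := mem_sdiff.2
    ⟨hB (Prod.mk_le_mk.2 ⟨le_rfl, hkj.le.trans hle.2⟩) hxB,
      fun h => (mem_sdiff.1 hk).2 (hR (Prod.mk_le_mk.2 ⟨hle.1, le_rfl⟩) h)⟩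
  exact (hmin _ hikX rfl).not_gt (hkj.trans_le hle.2)

lemma isLowerSet_union_filter_snd_eq (hR : IsLowerSet (R : Set (ι × κ)))
    (hB : IsLowerSet (B : Set (ι × κ))) (hp : ∀ j < p, colSlice R p ⊆ colSlice B j) :
    IsLowerSet ((B ∪ {x ∈ R \ B | x.2 = p} : Finset (ι × κ)) : Set (ι × κ)) := by
  rintro ⟨i, j⟩ ⟨i', j'⟩ hle hx
  simp only [coe_union, Set.mem_union, mem_coe, mem_filter, mem_sdiff] at hx ⊢
  obtain hx | ⟨⟨hxR, -⟩, rfl⟩ := hx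
  · exact .inl (hB hle hx)
  obtain hlt | rfl := hle.2.lt_or_eq
  · have hij : (i, j') ∈ B := mem_colSlice.1 (hp j' hlt (mem_colSlice.2 hxR))
    exact .inl (hB (Prod.mk_le_mk.2 ⟨hle.1, le_rfl⟩) hij)
  · have := hR hle hxR
    rw [mem_coe] at this
    tauto

lemma DominancePair.exists_isReduction_of_card_le (h : DominancePair R B)
    (hpq : IsExchangeBlock R B p q)
    (hle : #(colSlice R p \ colSlice B p) ≤ #(colSlice B q \ colSlice R q)) :
    ∃ R' B', DominancePair R' B' ∧ IsReduction R B R' B' := by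
  obtain ⟨I, hIN, hIcard, hI⟩ := exists_initial_subset_card_eq _ hle
  have hIq (i : ι) (hi : i ∈ I) : (i, q) ∈ B \ R := by
    rw [← mem_colSlice, colSlice_sdiff]
    exact hIN hi
  have hIp : I ⊆ colSlice R p := fun i hi => hpq.ssubset_left.subset <| mem_colSlice.2 <|
    h.isLowerSet_right (Prod.mk_le_mk.2 ⟨le_rfl, hpq.lt.le⟩) (mem_sdiff.1 (hIq i hi)).1
  let A := leftmost (B \ R) I
  let D := {x ∈ R \ B | x.2 = p}
  have hA : A ⊆ B \ R := leftmost_subset _ _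
  have hArow (i : ι) : #(rowSlice A i) = if i ∈ I then 1 else 0 := card_rowSlice_leftmost hIq i
  have hAcard : #A = #D := by
    rw [card_leftmost hIq, hIcard, ← colSlice_sdiff, card_filter_snd_eq]
  have hleft : (R ∪ A) \ (B ∪ D) = (R \ B) \ D := by
    ext x; have := @hA x; grind
  have hright : (B ∪ D) \ (R ∪ A) = (B \ R) \ A := by
    ext x; grind
  refine ⟨R ∪ A, B ∪ D, ⟨?_, ?_, ?_, ?_⟩, isReduction_union hA hArow hpq.ssubset_left hIp hIcard
    (colSlice_subset_or_subset h.isLowerSet_left h.isLowerSet_right)⟩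
  · refine isLowerSet_union_leftmost h.isLowerSet_left h.isLowerSet_right hIq
      fun i hi i' hle hi' => ?_
    rw [← mem_colSlice, colSlice_sdiff] at hi'
    exact hI i hi i' hi' hle
  · exact isLowerSet_union_filter_snd_eq h.isLowerSet_left h.isLowerSet_right hpq.subset_of_lt
  · rw [hleft, hright, card_sdiff_of_subset (filter_subset _ _), card_sdiff_of_subset hA, hAcard,
      h.card_sdiff_eq]
  · rw [hleft, hright]
    exact h.ballot.sdiff hpq.separated hA (fun x hx => snd_le_of_mem_leftmost hIq hx) hAcard

lemma DominancePair.snd_ne_snd (h : DominancePair R B) {x y : ι × κ} (hx : x ∈ B \ R)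
    (hy : y ∈ R \ B) : x.2 ≠ y.2 := fun heq => by
  have hss := colSlice_ssubset_of_mem_sdiff h.isLowerSet_left h.isLowerSet_right hy
  rw [← heq] at hss
  exact hss.asymm (colSlice_ssubset_of_mem_sdiff h.isLowerSet_right h.isLowerSet_left hx)

lemma mem_left_of_le_snd (hR : IsLowerSet (R : Set (ι × κ))) (hB : IsLowerSet (B : Set (ι × κ)))
    {i : ι} {j : κ} {y : ι × κ} (hij : (i, j) ∈ B) (hy : y ∈ R \ B) (hqy : q ≤ y.2)
    (hyj : y.2 ≤ j) : (i, q) ∈ R := by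
  rw [mem_sdiff] at hy
  obtain hiy | hyi := le_total i y.1
  · exact hR (Prod.mk_le_mk.2 ⟨hiy, hqy⟩) hy.1
  · exact absurd (hB (Prod.mk_le_mk.2 ⟨hyi, hyj⟩) hij) hy.2

/-- Take for `p` the first column of `R \ B` and for `q` the last column in the first run of columns
of `B \ R`. -/
lemma DominancePair.exists_isExchangeBlock (h : DominancePair R B) (hne : (R \ B).Nonempty) :
    ∃ p q, IsExchangeBlock R B p q := by
  obtain ⟨y₀, hy₀, hy₀_min⟩ := exists_min_image (R \ B) Prod.snd hne
  have hne' : (B \ R).Nonempty := by rwa [← card_pos, ← h.card_sdiff_eq, card_pos]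
  obtain ⟨x₀, hx₀, hx₀_min⟩ := exists_min_image (B \ R) Prod.snd hne'
  have hy₀x₀ : y₀.2 ≤ x₀.2 := by
    obtain ⟨y, hy, hyx⟩ := h.ballot.exists_snd_le hx₀
    exact (hy₀_min y hy).trans hyx
  let firstRun := {x ∈ B \ R | ∀ y ∈ R \ B, y.2 ≤ x.2 → y.2 < x₀.2}
  have hx₀_run : x₀ ∈ firstRun :=
    mem_filter.2 ⟨hx₀, fun y hy hyx => hyx.lt_of_ne (h.snd_ne_snd hx₀ hy).symm⟩
  obtain ⟨x₁, hx₁, hx₁_max⟩ := exists_max_image firstRun Prod.snd ⟨x₀, hx₀_run⟩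
  obtain ⟨hx₁, hx₁_run⟩ := mem_filter.1 hx₁
  have hy₀x₁ : y₀.2 < x₁.2 :=
    (hy₀x₀.trans (hx₁_max x₀ hx₀_run)).lt_of_ne (h.snd_ne_snd hx₁ hy₀).symm
  refine ⟨y₀.2, x₁.2, hy₀x₁,
    colSlice_ssubset_of_mem_sdiff h.isLowerSet_left h.isLowerSet_right hy₀,
    colSlice_ssubset_of_mem_sdiff h.isLowerSet_right h.isLowerSet_left hx₁,
    fun x hx y hy _ hyx₁ => (hx₁_run y hy hyx₁).le.trans (hx₀_min x hx), fun j hj i hi => ?_,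
    fun j hj i hi => ?_⟩
  all_goals
    rw [mem_colSlice] at hi ⊢
    by_contra hi'
  · have hij : (i, j) ∈ R := h.isLowerSet_left (Prod.mk_le_mk.2 ⟨le_rfl, hj.le⟩) hi
    exact (hy₀_min (i, j) (mem_sdiff.2 ⟨hij, hi'⟩)).not_gt hj
  · have hij : (i, j) ∈ B \ R := mem_sdiff.2
      ⟨hi, fun hij => hi' (h.isLowerSet_left (Prod.mk_le_mk.2 ⟨le_rfl, hj.le⟩) hij)⟩
    have hij_run : (i, j) ∉ firstRun := fun hij => (hx₁_max _ hij).not_gt hj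
    obtain ⟨y, hy, hyj, hx₀y⟩ : ∃ y ∈ R \ B, y.2 ≤ j ∧ x₀.2 ≤ y.2 := by
      simpa only [firstRun, mem_filter, hij, true_and, not_forall, not_lt, exists_prop]
        using hij_run
    have hx₁y : x₁.2 ≤ y.2 := le_of_not_gt fun hyx₁ => (hx₁_run y hy hyx₁.le).not_ge hx₀y
    exact hi' (mem_left_of_le_snd h.isLowerSet_left h.isLowerSet_right hi hy hx₁y hyj)

variable [Finite ι] [Finite κ]

lemma DominancePair.exists_isReduction (h : DominancePair R B) (hne : (R \ B).Nonempty) :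
    ∃ R' B', DominancePair R' B' ∧ IsReduction R B R' B' := by
  have := Fintype.ofFinite ι
  have := Fintype.ofFinite κ
  obtain ⟨p, q, hpq⟩ := h.exists_isExchangeBlock hne
  obtain hle | hle := le_total #(colSlice R p \ colSlice B p) #(colSlice B q \ colSlice R q)
  · exact h.exists_isReduction_of_card_le hpq hle
  · have hle' : #(colSlice Rᶜ q \ colSlice Bᶜ q) ≤ #(colSlice Bᶜ p \ colSlice Rᶜ p) := by
      simpa only [colSlice_compl, compl_sdiff_compl] using hle
    obtain ⟨R', B', h', hred⟩ := h.compl.exists_isReduction_of_card_le hpq.compl hle'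
    exact ⟨_, _, h'.compl, hred.of_compl h.card_sdiff_eq h'.card_sdiff_eq⟩

lemma DominancePair.of_isRealization (hR : IsLowerSet (R : Set (ι × κ)))
    (hB : IsLowerSet (B : Set (ι × κ))) (hF : IsRealization R B F) : DominancePair R B := by
  classical
  have := Fintype.ofFinite ι
  have := Fintype.ofFinite κ
  have hcard : #R = #B := by
    simp only [← sum_card_rowSlice R, ← hF.card_rowSlice, sum_card_rowSlice,
      ← sum_card_colSlice B, ← hF.card_colSlice, sum_card_colSlice]
  refine ⟨hR, hB, card_sdiff_comm hcard, fun T hT => ?_⟩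
  have hrow (i : ι) :
      #(rowSlice {x ∈ F | x.2 ∈ T} i) ≤ #(rowSlice {x ∈ R | x.2 ∈ T} i) := by
    have rowSlice_filter (S : Finset (ι × κ)) :
        rowSlice {x ∈ S | x.2 ∈ T} i = {j ∈ rowSlice S i | j ∈ T} := by ext; simp
    rw [rowSlice_filter, rowSlice_filter]
    obtain hRT | hTR := (isLowerSet_rowSlice hR i).total hT
    · rw [filter_true_of_mem hRT, ← hF.card_rowSlice]
      exact card_filter_le _ _
    · exact card_le_card fun j hj =>
        mem_filter.2 ⟨hTR (mem_filter.1 hj).2, (mem_filter.1 hj).2⟩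
  have hcol (j : κ) : #(colSlice {x ∈ B | x.2 ∈ T} j) = #(colSlice {x ∈ F | x.2 ∈ T} j) := by
    have colSlice_filter (S : Finset (ι × κ)) :
        colSlice {x ∈ S | x.2 ∈ T} j = {_i ∈ colSlice S j | j ∈ T} := by
      ext; rw [mem_filter]; simp
    by_cases hj : j ∈ T
    · simp only [colSlice_filter, filter_true_of_mem fun _ _ => hj, hF.card_colSlice]
    · simp only [colSlice_filter, filter_false_of_mem fun _ _ => hj]
  have hBR : #{x ∈ B | x.2 ∈ T} ≤ #{x ∈ R | x.2 ∈ T} := by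
    rw [← sum_card_colSlice, ← sum_card_rowSlice]
    simp only [hcol]
    rw [sum_card_colSlice, ← sum_card_rowSlice]
    exact sum_le_sum fun i _ => hrow i
  have filter_sdiff_filter (S S' : Finset (ι × κ)) :
      {x ∈ S \ S' | x.2 ∈ T} = {x ∈ S | x.2 ∈ T} \ {x ∈ S' | x.2 ∈ T} := by grind
  convert card_sdiff_le_card_sdiff_iff.2 hBR using 2 <;> convert filter_sdiff_filter _ _

theorem DominancePair.exists_isNestedRealization {R B : Finset (ι × κ)} (h : DominancePair R B) :
    ∃ F G : Finset (ι × κ), IsNestedRealization R B F ∧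
      IsLowerSet (G : Set (ι × κ)) ∧ #(F ∆ G) ≤ #(R \ B) := by
  obtain hRB | hne := (R \ B).eq_empty_or_nonempty
  · have hBR : B \ R = ∅ := by rw [← card_eq_zero, ← h.card_sdiff_eq, hRB, card_empty]
    obtain rfl : R = B :=
      (sdiff_eq_empty_iff_subset.1 hRB).antisymm (sdiff_eq_empty_iff_subset.1 hBR)
    exact ⟨R, R, ⟨⟨fun _ => rfl, fun _ => rfl⟩, fun _ => .inl Subset.rfl⟩, h.isLowerSet_left,
      by simp⟩
  · obtain ⟨R', B', h', hred⟩ := h.exists_isReduction hne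
    obtain ⟨F', G, hF', hG, hle'⟩ := h'.exists_isNestedRealization
    obtain ⟨F, hF, hle⟩ := hred.exists_isNestedRealization F' hF'
    refine ⟨F, G, hF, hG, ?_⟩
    calc #(F ∆ G) ≤ #(F ∆ F') + #(F' ∆ G) :=
          (card_le_card (symmDiff_triangle F F' G)).trans (card_union_le _ _)
      _ ≤ #(R \ B) := by omega
termination_by #(R \ B)
decreasing_by exact hred.card_lt

end LowerSets

section Grid

variable {m n : ℕ} {r c : ℕ → ℕ} {S G : Finset (Fin m × Fin n)}

/-- The embedding of `Fin m × Fin n`, whose coordinates start at `0`, onto the box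
`{1, …, m} × {1, …, n}` of the integer grid. -/
def cell (m n : ℕ) : Fin m × Fin n ↪ ℤ × ℤ where
  toFun x := ((x.1 : ℤ) + 1, (x.2 : ℤ) + 1)
  inj' x y h := by
    simp only [Prod.mk.injEq, add_left_inj, Nat.cast_inj, Fin.val_inj] at h
    exact Prod.ext h.1 h.2

lemma cell_apply (x : Fin m × Fin n) : cell m n x = ((x.1 : ℤ) + 1, (x.2 : ℤ) + 1) := rfl

lemma mem_map_cell {a b : ℤ} :
    (a, b) ∈ S.map (cell m n) ↔ ∃ i j, (i, j) ∈ S ∧ (i : ℤ) + 1 = a ∧ (j : ℤ) + 1 = b := by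
  simp [cell_apply]

lemma map_cell_univ :
    (univ : Finset (Fin m × Fin n)).map (cell m n) = Icc 1 (m : ℤ) ×ˢ Icc 1 (n : ℤ) := by
  ext ⟨a, b⟩
  simp only [mem_map_cell, mem_univ, true_and, mem_product, mem_Icc]
  constructor
  · rintro ⟨i, j, rfl, rfl⟩
    omega
  · rintro ⟨ha, hb⟩
    exact ⟨⟨(a - 1).toNat, by omega⟩, ⟨(b - 1).toNat, by omega⟩, by simp; omega, by simp; omega⟩

lemma forall_mem_Icc_one_iff {P : ℕ → Prop} :
    (∀ i ∈ Icc 1 m, P i) ↔ ∀ i : Fin m, P (i + 1) := by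
  refine ⟨fun h i => h _ (mem_Icc.2 ⟨by omega, i.2⟩), fun h i hi => ?_⟩
  obtain ⟨h1, him⟩ := mem_Icc.1 hi
  simpa only [Nat.sub_add_cancel h1] using h ⟨i - 1, by omega⟩

lemma sum_Icc_one_eq_sum_fin (f : ℕ → ℕ) (m : ℕ) : ∑ i ∈ Icc 1 m, f i = ∑ i : Fin m, f (i + 1) := by
  rw [Fin.sum_univ_eq_sum_range (fun i => f (i + 1)), range_eq_Ico, sum_Ico_add']
  rfl

lemma forall_rowSum_map_cell_eq_iff :
    (∀ i ∈ Icc 1 m, rowSum (S.map (cell m n)) i = r i) ↔ ∀ i, #(rowSlice S i) = r (i + 1) := by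
  rw [forall_mem_Icc_one_iff]
  refine forall_congr' fun i => ?_
  simp [rowSum, filter_map, Function.comp_def, cell_apply, Fin.val_inj, card_filter_fst_eq]

lemma forall_colSum_map_cell_eq_iff :
    (∀ j ∈ Icc 1 n, colSum (S.map (cell m n)) j = c j) ↔ ∀ j, #(colSlice S j) = c (j + 1) := by
  rw [forall_mem_Icc_one_iff]
  refine forall_congr' fun j => ?_
  simp [colSum, filter_map, Function.comp_def, cell_apply, Fin.val_inj, card_filter_snd_eq]

lemma mem_map_cell_of_le (hG : IsLowerSet (G : Set (Fin m × Fin n))) {a a' b b' : ℤ}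
    (h : (a', b') ∈ G.map (cell m n)) (ha : 1 ≤ a) (haa' : a ≤ a') (hb : 1 ≤ b) (hbb' : b ≤ b') :
    (a, b) ∈ G.map (cell m n) := by
  obtain ⟨i, j, hij, rfl, rfl⟩ := mem_map_cell.1 h
  exact mem_map_cell.2 ⟨⟨(a - 1).toNat, by omega⟩, ⟨(b - 1).toNat, by omega⟩,
    hG (Prod.mk_le_mk.2 ⟨Fin.le_def.2 (by simp; omega), Fin.le_def.2 (by simp; omega)⟩) hij,
    by simp; omega, by simp; omega⟩

lemma mem_box_of_mem_map_cell {p : ℤ × ℤ} (hp : p ∈ S.map (cell m n)) :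
    p.1 ∈ Icc 1 (m : ℤ) ∧ p.2 ∈ Icc 1 (n : ℤ) :=
  mem_product.1 (map_cell_univ.subset (map_subset_map.2 (subset_univ S) hp))

lemma card_map_cell_symmDiff (S G : Finset (Fin m × Fin n)) :
    #(S.map (cell m n) ∆ G.map (cell m n)) = #(S ∆ G) := by
  rw [map_eq_image, map_eq_image, ← image_symmDiff _ _ (cell m n).injective,
    card_image_of_injective _ (cell m n).injective]

lemma Lh_map_cell_le (hG : IsLowerSet (G : Set (Fin m × Fin n))) :
    Lh (S.map (cell m n)) ≤ 2 * n + 2 * #(S ∆ G) := by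
  have hLh : Lh (G.map (cell m n)) ≤ 2 * #(Icc 1 (n : ℤ)) := by
    refine Lh_le_of_ordConnected (fun p hp => (mem_box_of_mem_map_cell hp).2) fun b =>
      ⟨fun a ha a' ha' z hz => ?_⟩
    obtain ⟨ha1, hb1⟩ := mem_box_of_mem_map_cell ha
    exact mem_map_cell_of_le hG ha' ((mem_Icc.1 ha1).1.trans hz.1) hz.2 (mem_Icc.1 hb1).1 le_rfl
  calc Lh (S.map (cell m n))
      ≤ Lh (G.map (cell m n)) + 2 * #(S.map (cell m n) ∆ G.map (cell m n)) :=
        Lh_le_Lh_add_two_mul_card_symmDiff _ _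
    _ ≤ 2 * n + 2 * #(S ∆ G) := by
        rw [Int.card_Icc, add_sub_cancel_right, Int.toNat_natCast] at hLh
        rw [card_map_cell_symmDiff]
        gcongr

lemma Lv_map_cell_le (hG : IsLowerSet (G : Set (Fin m × Fin n))) :
    Lv (S.map (cell m n)) ≤ 2 * m + 2 * #(S ∆ G) := by
  have hLv : Lv (G.map (cell m n)) ≤ 2 * #(Icc 1 (m : ℤ)) := by
    refine Lv_le_of_ordConnected (fun p hp => (mem_box_of_mem_map_cell hp).1) fun a =>
      ⟨fun b hb b' hb' z hz => ?_⟩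
    obtain ⟨ha1, hb1⟩ := mem_box_of_mem_map_cell hb
    exact mem_map_cell_of_le hG hb' (mem_Icc.1 ha1).1 le_rfl ((mem_Icc.1 hb1).1.trans hz.1) hz.2
  calc Lv (S.map (cell m n))
      ≤ Lv (G.map (cell m n)) + 2 * #(S.map (cell m n) ∆ G.map (cell m n)) :=
        Lv_le_Lv_add_two_mul_card_symmDiff _ _
    _ ≤ 2 * m + 2 * #(S ∆ G) := by
        rw [Int.card_Icc, add_sub_cancel_right, Int.toNat_natCast] at hLv
        rw [card_map_cell_symmDiff]
        gcongr

/-- The set whose row `i` consists of the first `r i` cells. -/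
def rowDiagram (m n : ℕ) (r : ℕ → ℕ) : Finset (Fin m × Fin n) := {x | (x.2 : ℕ) < r (x.1 + 1)}

/-- The set whose column `j` consists of the first `c j` cells. -/
def colDiagram (m n : ℕ) (c : ℕ → ℕ) : Finset (Fin m × Fin n) := {x | (x.1 : ℕ) < c (x.2 + 1)}

lemma isLowerSet_rowDiagram (hr : ∀ i i' : ℕ, 1 ≤ i → i ≤ i' → i' ≤ m → r i' ≤ r i) :
    IsLowerSet (rowDiagram m n r : Set (Fin m × Fin n)) := fun x y hyx hx => by
  simp only [rowDiagram, coe_filter_univ, Set.mem_ofPred_eq] at hx ⊢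
  exact (Fin.le_def.1 hyx.2).trans_lt <|
    hx.trans_le (hr _ _ (by omega) (Nat.succ_le_succ hyx.1) x.1.2)

lemma isLowerSet_colDiagram (hc : ∀ j j' : ℕ, 1 ≤ j → j ≤ j' → j' ≤ n → c j' ≤ c j) :
    IsLowerSet (colDiagram m n c : Set (Fin m × Fin n)) := fun x y hyx hx => by
  simp only [colDiagram, coe_filter_univ, Set.mem_ofPred_eq] at hx ⊢
  exact (Fin.le_def.1 hyx.1).trans_lt <|
    hx.trans_le (hc _ _ (by omega) (Nat.succ_le_succ hyx.2) x.2.2)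

lemma card_rowSlice_rowDiagram (i : Fin m) :
    #(rowSlice (rowDiagram m n r) i) = min n (r (i + 1)) := by
  rw [← Fin.card_filter_val_lt]
  congr 1; ext; simp [rowDiagram]

lemma card_colSlice_colDiagram (j : Fin n) :
    #(colSlice (colDiagram m n c) j) = min m (c (j + 1)) := by
  rw [← Fin.card_filter_val_lt]
  congr 1; ext; simp [colDiagram]

lemma card_rowSlice_colDiagram (i : Fin m) :
    #(rowSlice (colDiagram m n c) i) = #{j ∈ Icc 1 n | (i : ℕ) + 1 ≤ c j} := by
  have hrow : rowSlice (colDiagram m n c) i =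
      ({j : Fin n | (i : ℕ) + 1 ≤ c (j + 1)} : Finset (Fin n)) := by
    ext; simp [colDiagram]
  rw [hrow, card_filter, card_filter, sum_Icc_one_eq_sum_fin]

lemma isRealization_rowDiagram_colDiagram (hr : ∀ i, #(rowSlice S i) = r (i + 1))
    (hc : ∀ j, #(colSlice S j) = c (j + 1)) :
    IsRealization (rowDiagram m n r) (colDiagram m n c) S where
  card_rowSlice i := by
    rw [card_rowSlice_rowDiagram, ← hr, min_eq_right (card_finset_fin_le _)]
  card_colSlice j := by
    rw [card_colSlice_colDiagram, ← hc, min_eq_right (card_finset_fin_le _)]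

lemma sum_natAbs_sub_eq (hr : ∀ i i' : ℕ, 1 ≤ i → i ≤ i' → i' ≤ m → r i' ≤ r i)
    (hc : ∀ j j' : ℕ, 1 ≤ j → j ≤ j' → j' ≤ n → c j' ≤ c j) (hrn : ∀ i ∈ Icc 1 m, r i ≤ n)
    {b : ℕ → ℕ} (hb : ∀ i, b i = #{j ∈ Icc 1 n | i ≤ c j}) :
    ∑ i ∈ Icc 1 m, ((r i : ℤ) - b i).natAbs =
      #(rowDiagram m n r \ colDiagram m n c) + #(colDiagram m n c \ rowDiagram m n r) := by
  rw [← sum_natAbs_card_rowSlice_sub (isLowerSet_rowDiagram hr) (isLowerSet_colDiagram hc),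
    sum_Icc_one_eq_sum_fin]
  refine sum_congr rfl fun i _ => ?_
  rw [card_rowSlice_rowDiagram, card_rowSlice_colDiagram, hb,
    min_eq_right (forall_mem_Icc_one_iff.1 hrn i)]

end Grid

theorem exists_small_boundary_general (m n : ℕ) (r c : ℕ → ℕ)
    (hr : ∀ i i' : ℕ, 1 ≤ i → i ≤ i' → i' ≤ m → r i' ≤ r i)
    (hc : ∀ j j' : ℕ, 1 ≤ j → j ≤ j' → j' ≤ n → c j' ≤ c j)
    (hcons : ∃ F : Finset (ℤ × ℤ),
      F ⊆ Finset.Icc 1 (m : ℤ) ×ˢ Finset.Icc 1 (n : ℤ) ∧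
      (∀ i ∈ Finset.Icc 1 m, rowSum F i = r i) ∧
      (∀ j ∈ Finset.Icc 1 n, colSum F j = c j))
    (b : ℕ → ℕ)
    (hb : ∀ i : ℕ, b i = ((Finset.Icc 1 n).filter fun j => i ≤ c j).card) :
    ∃ F2 : Finset (ℤ × ℤ),
      F2 ⊆ Finset.Icc 1 (m : ℤ) ×ˢ Finset.Icc 1 (n : ℤ) ∧
      (∀ i ∈ Finset.Icc 1 m, rowSum F2 i = r i) ∧
      (∀ j ∈ Finset.Icc 1 n, colSum F2 j = c j) ∧
      Lh F2 ≤ 2 * n + ∑ i ∈ Finset.Icc 1 m, ((r i : ℤ) - b i).natAbs ∧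
      Lv F2 ≤ 2 * m + ∑ i ∈ Finset.Icc 1 m, ((r i : ℤ) - b i).natAbs := by
  obtain ⟨F, hFbox, hFr, hFc⟩ := hcons
  rw [← map_cell_univ] at hFbox
  obtain ⟨S, -, rfl⟩ := subset_map_iff.1 hFbox
  rw [forall_rowSum_map_cell_eq_iff] at hFr
  rw [forall_colSum_map_cell_eq_iff] at hFc
  have hrn : ∀ i ∈ Icc 1 m, r i ≤ n :=
    forall_mem_Icc_one_iff.2 fun i => hFr i ▸ card_finset_fin_le _
  have hS := isRealization_rowDiagram_colDiagram hFr hFc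
  have hRB :=
    DominancePair.of_isRealization (isLowerSet_rowDiagram hr) (isLowerSet_colDiagram hc) hS
  have hsum := sum_natAbs_sub_eq hr hc hrn hb
  rw [← hRB.card_sdiff_eq] at hsum
  obtain ⟨F₂, G, hF₂, hG, hdist⟩ := hRB.exists_isNestedRealization
  have hLh := Lh_map_cell_le (S := F₂) hG
  have hLv := Lv_map_cell_le (S := F₂) hG
  refine ⟨F₂.map (cell m n), map_cell_univ ▸ map_subset_map.2 (subset_univ F₂),
    forall_rowSum_map_cell_eq_iff.2 fun i => ?_, forall_colSum_map_cell_eq_iff.2 fun j => ?_,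
    by omega, by omega⟩
  · rw [hF₂.card_rowSlice, ← hS.card_rowSlice, hFr]
  · rw [hF₂.card_colSlice, ← hS.card_colSlice, hFc]

/-- For consistent monotone line sums with `n = r 1` and `m = c 1`, there exists a set
`F₂` with these line sums whose horizontal boundary has length at most `2n + 2α` and
whose vertical boundary has length at most `2m + 2α`, where
`2α = ∑ |rᵢ - bᵢ|` with `bᵢ = #{j : c_j ≥ i}`. -/
theorem exists_small_boundary (m n : ℕ) (r c : ℕ → ℕ) (hm : 1 ≤ m) (hn : 1 ≤ n)
    (hr : ∀ i i' : ℕ, 1 ≤ i → i ≤ i' → i' ≤ m → r i' ≤ r i)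
    (hc : ∀ j j' : ℕ, 1 ≤ j → j ≤ j' → j' ≤ n → c j' ≤ c j)
    (hr1 : r 1 = n) (hc1 : c 1 = m)
    (hcons : ∃ F : Finset (ℤ × ℤ),
      F ⊆ Finset.Icc 1 (m : ℤ) ×ˢ Finset.Icc 1 (n : ℤ) ∧
      (∀ i ∈ Finset.Icc 1 m, rowSum F i = r i) ∧
      (∀ j ∈ Finset.Icc 1 n, colSum F j = c j))
    (b : ℕ → ℕ)
    (hb : ∀ i : ℕ, b i = ((Finset.Icc 1 n).filter fun j => i ≤ c j).card) :
    ∃ F2 : Finset (ℤ × ℤ),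
      F2 ⊆ Finset.Icc 1 (m : ℤ) ×ˢ Finset.Icc 1 (n : ℤ) ∧
      (∀ i ∈ Finset.Icc 1 m, rowSum F2 i = r i) ∧
      (∀ j ∈ Finset.Icc 1 n, colSum F2 j = c j) ∧
      Lh F2 ≤ 2 * n + ∑ i ∈ Finset.Icc 1 m, ((r i : ℤ) - b i).natAbs ∧
      Lv F2 ≤ 2 * m + ∑ i ∈ Finset.Icc 1 m, ((r i : ℤ) - b i).natAbs :=
  exists_small_boundary_general m n r c hr hc hcons b hb
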